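/- For every natural number N there exist constants C(N) and C'(N), depending only on N, with the following property. Let F_q be a finite field with q elements and characteristic p, let d ≥ 1, let f ∈ F_q[t][x₁,…,x_d] be square-free with deg_t f ≤ N and total degree in (x₁,…,x_d) at most N, and let a₁, b₁, c₁, …, a_d, b_d, c_d ∈ F_q[t] with gcd(a_i, b_i) = 1 and deg a_i, deg b_i, deg c_i ≤ N for all i. Assume that either (i) p > C(N), or (ii) for every i = 1,…,d, a_i ≠ 0 and b_i/a_i ∉ F_q(t^p). Then the number of tuples (β₁,…,β_{2d}) ∈ F_q^{2d} such that f(t, a₁(t)β₁ + b₁(t)β_{d+1} + c₁(t), …, a_d(t)β_d + b_d(t)β_{2d} + c_d(t)) is not square-free in F_q[t] is at most C'(N)·q^{2d−1}. In particular, if q > C'(N) there exists such a tuple making the value square-free. -/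

import Mathlib

/-- The condition that the rational function `b/a ∈ F(t)` does not lie in the subfield
`F(t^p)` generated over (the image of) `F` by `t^p`, where `p = ringChar F`. -/
def notInFtp (F : Type*) [Field F] (a b : Polynomial F) : Prop :=
  (algebraMap (Polynomial F) (RatFunc F)) b / (algebraMap (Polynomial F) (RatFunc F)) a ∉
    Subfield.closure (Set.range (RatFunc.C (K := F)) ∪ {RatFunc.X ^ ringChar F})

/-!
Replace the parameters `βᵢ`, `γᵢ` by indeterminates. Since `aᵢ` and `bᵢ` are coprime, the
substitution `xᵢ ↦ aᵢ βᵢ + bᵢ γᵢ + cᵢ` extends to an invertible affine change of variables over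
`F[t]`, so the resulting polynomial `G ∈ F[β, γ][t]` is squarefree. The resultant `D ∈ F[β, γ]` of
`G` and `∂G/∂t` has bounded degree, and a specialization of `G` is squarefree off the zeros of `D`;
once `D ≠ 0`, the Schwartz–Zippel bound concludes.

If `D = 0`, some irreducible factor `P` of `G` of positive `t`-degree divides `∂G/∂t`, and then
`∂P/∂t = 0` as `G` is squarefree. This is impossible when `p` is zero or exceeds the `t`-degree.
Otherwise `P` is itself a polynomial in the forms `aᵢ βᵢ + bᵢ γᵢ + cᵢ`, so
`bᵢ ∂P/∂βᵢ = aᵢ ∂P/∂γᵢ`. Differentiating in `t` gives `bᵢ' ∂P/∂βᵢ = aᵢ' ∂P/∂γᵢ`, and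
`bᵢ / aᵢ ∉ F(tᵖ)` makes the determinant `aᵢ bᵢ' - aᵢ' bᵢ` nonzero. Hence all partial derivatives of
`P` vanish and `P` is a `p`-th power, contradicting irreducibility.
-/

section Univariate

open Polynomial

theorem derivative_eq_zero_of_prime_dvd_of_dvd_derivative {R : Type*} [CommRing R] [IsDomain R]
    {G P : R[X]} (hG : Squarefree G) (hP : Prime P) (hPG : P ∣ G) (hPG' : P ∣ derivative G) :
    derivative P = 0 := by
  obtain ⟨Q, rfl⟩ := hPG
  have hPQ : ¬ P ∣ Q := fun h => hP.not_isUnit (hG P (mul_dvd_mul_left P h))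
  rw [derivative_mul, dvd_add_left (dvd_mul_right P _)] at hPG'
  exact dvd_derivative_iff.1 ((hP.dvd_or_dvd hPG').resolve_right hPQ)

theorem natDegree_eq_zero_of_derivative_eq_zero_of_lt_ringChar {R : Type*} [CommRing R]
    [IsDomain R] {P : R[X]} (hP : derivative P = 0)
    (h : ringChar R = 0 ∨ P.natDegree < ringChar R) : P.natDegree = 0 := by
  by_contra hdeg
  have hcoeff := congrArg (coeff · (P.natDegree - 1)) hP
  simp only [coeff_derivative, coeff_zero, Nat.cast_pred (Nat.pos_of_ne_zero hdeg),
    Nat.sub_add_cancel (Nat.one_le_iff_ne_zero.2 hdeg), sub_add_cancel, mul_eq_zero] at hcoeff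
  have hlead : P.coeff P.natDegree ≠ 0 := by
    rw [coeff_natDegree, leadingCoeff_ne_zero]
    rintro rfl
    exact hdeg natDegree_zero
  have hdvd : ringChar R ∣ P.natDegree := ringChar.dvd (hcoeff.resolve_left hlead)
  rcases h with h | h
  · exact hdeg (zero_dvd_iff.1 (h ▸ hdvd))
  · exact hdeg (Nat.eq_zero_of_dvd_of_lt hdvd h)

theorem isCoprime_map_fractionRing_of_prime_dvd {A K : Type*} [CommRing A] [IsDomain A]
    [UniqueFactorizationMonoid A] [Field K] [Algebra A K] [IsFractionRing A K] {G H : A[X]}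
    (hG : G ≠ 0) (h : ∀ P, Prime P → P ∣ G → P ∣ H → P.natDegree = 0) :
    IsCoprime (G.map (algebraMap A K)) (H.map (algebraMap A K)) := by
  have := Classical.arbitrary (NormalizedGCDMonoid A)
  have hinj : Function.Injective (algebraMap A K) := IsFractionRing.injective A K
  have coprime_of_isUnit {u v : K[X]} (hu : IsUnit u) : IsCoprime u v :=
    isCoprime_one_left.of_isCoprime_of_dvd_left hu.dvd
  induction G using UniqueFactorizationMonoid.induction_on_prime with
  | h₁ => exact absurd rfl hG
  | h₂ G hGunit => exact coprime_of_isUnit (hGunit.map (mapRingHom (algebraMap A K)))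
  | h₃ G P hG₀ hP ih =>
    rw [Polynomial.map_mul]
    refine .mul_left ?_ (ih hG₀ fun Q hQ hQG => h Q hQ (hQG.mul_left P))
    by_cases hdeg : P.natDegree = 0
    · rw [eq_C_of_natDegree_eq_zero hdeg, map_C]
      have hcoeff : P.coeff 0 ≠ 0 := fun h0 =>
        hP.ne_zero (by rw [eq_C_of_natDegree_eq_zero hdeg, h0, C_0])
      exact coprime_of_isUnit (isUnit_C.2 ((map_ne_zero_iff _ hinj).2 hcoeff).isUnit)
    · have hprim : P.IsPrimitive := hP.irreducible.isPrimitive hdeg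
      refine (hprim.irreducible_iff_irreducible_map_fraction_map.1
        hP.irreducible).coprime_iff_not_dvd.2 fun hdvd => hdeg ?_
      exact h P hP (dvd_mul_right P G) (hprim.dvd_of_fraction_map_dvd_fraction_map hdvd)

end Univariate

section DerivResultant

open Polynomial (derivative resultant)
open scoped Polynomial

/-- The resultant of `G` and its derivative, a polynomial expression in the coefficients of `G`
whose nonvanishing at a specialization of the coefficients makes that specialization separable.
The derivative is given the formal degree `deg G + 1`, above its actual degree, so that a
constant `G` also has a nontrivial Sylvester matrix. -/
noncomputable def derivResultant {A : Type*} [CommRing A] (G : A[X]) : A :=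
  resultant G (derivative G) G.natDegree (G.natDegree + 1)

theorem separable_map_of_isUnit_derivResultant {A B : Type*} [CommRing A] [CommRing B] (φ : A →+* B)
    {G : A[X]} (h : IsUnit (φ (derivResultant G))) : (G.map φ).Separable := by
  obtain ⟨P, Q, -, -, hPQ⟩ := Polynomial.exists_mul_add_mul_eq_C_resultant
    (G.map φ) (derivative (G.map φ)) (m := G.natDegree) (n := G.natDegree + 1)
    Polynomial.natDegree_map_le
    ((Polynomial.natDegree_derivative_le _).trans
      ((Nat.sub_le _ _).trans (Polynomial.natDegree_map_le.trans (Nat.le_succ _))))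
    (.inr (Nat.succ_ne_zero _))
  rw [Polynomial.derivative_map, Polynomial.resultant_map_map, ← Polynomial.derivative_map] at hPQ
  obtain ⟨v, hv⟩ := (Polynomial.isUnit_C.2 h).exists_left_inv
  refine ⟨v * P, v * Q, ?_⟩
  rw [← hv, derivResultant, ← hPQ]
  ring

theorem derivResultant_ne_zero {A : Type*} [CommRing A] [IsDomain A] [UniqueFactorizationMonoid A]
    {G : A[X]} (hG : G ≠ 0) (h : ∀ P, Prime P → P ∣ G → P ∣ derivative G → P.natDegree = 0) :
    derivResultant G ≠ 0 := by
  set ι := algebraMap A (FractionRing A)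
  have hι : Function.Injective ι := IsFractionRing.injective A (FractionRing A)
  have hdeg : (G.map ι).natDegree = G.natDegree := Polynomial.natDegree_map_eq_of_injective hι G
  have hres : resultant (G.map ι) (derivative (G.map ι)) ≠ 0 := by
    refine Polynomial.resultant_ne_zero _ _ ?_
    rw [Polynomial.derivative_map]
    exact isCoprime_map_fractionRing_of_prime_dvd hG h
  have hdeg' : (derivative (G.map ι)).natDegree ≤ G.natDegree := by
    rw [← hdeg]
    exact (Polynomial.natDegree_derivative_le _).trans (Nat.sub_le _ _)
  obtain ⟨k, hk⟩ := Nat.exists_eq_add_of_le (hdeg'.trans (Nat.le_succ _))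
  have hlead : (G.map ι).coeff G.natDegree ≠ 0 := by
    rwa [Polynomial.coeff_map, map_ne_zero_iff _ hι, Polynomial.coeff_natDegree,
      Polynomial.leadingCoeff_ne_zero]
  have hmap : ι (derivResultant G) =
      (G.map ι).coeff G.natDegree ^ k * resultant (G.map ι) (derivative (G.map ι)) := by
    rw [hdeg, ← Polynomial.resultant_add_right_deg _ _ _ _ _ le_rfl, ← hk,
      Polynomial.derivative_map, Polynomial.resultant_map_map, derivResultant]
  rw [← map_ne_zero_iff ι hι, hmap]
  exact mul_ne_zero (pow_ne_zero k hlead) hres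

end DerivResultant

section TotalDegree

open MvPolynomial (totalDegree)
open scoped Polynomial

variable {R τ : Type*}

theorem totalDegree_sylvester_le [CommSemiring R] {G H : (MvPolynomial τ R)[X]} {N : ℕ}
    (hG : ∀ k, (G.coeff k).totalDegree ≤ N) (hH : ∀ k, (H.coeff k).totalDegree ≤ N)
    {m n : ℕ} (i j : Fin (m + n)) : (Polynomial.sylvester G H m n i j).totalDegree ≤ N := by
  induction j using Fin.addCases <;>
    simp only [Polynomial.sylvester, Matrix.of_apply, Fin.addCases_left, Fin.addCases_right] <;>
    split_ifs <;> simp [hG, hH]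

theorem totalDegree_resultant_le [CommRing R] {G H : (MvPolynomial τ R)[X]} {N : ℕ}
    (hG : ∀ k, (G.coeff k).totalDegree ≤ N) (hH : ∀ k, (H.coeff k).totalDegree ≤ N) (m n : ℕ) :
    (Polynomial.resultant G H m n).totalDegree ≤ (m + n) * N := by
  rw [Polynomial.resultant, Matrix.det_apply]
  refine MvPolynomial.totalDegree_finsetSum_le fun s _ => ?_
  have hprod : (∏ i, Polynomial.sylvester G H m n (s i) i).totalDegree ≤ (m + n) * N :=
    calc (∏ i, Polynomial.sylvester G H m n (s i) i).totalDegree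
      _ ≤ ∑ i, (Polynomial.sylvester G H m n (s i) i).totalDegree :=
        MvPolynomial.totalDegree_finsetProd _ _
      _ ≤ ∑ _ : Fin (m + n), N :=
        Finset.sum_le_sum fun i _ => totalDegree_sylvester_le hG hH (s i) i
      _ = (m + n) * N := by simp
  rcases Int.units_eq_one_or (Equiv.Perm.sign s) with h | h <;> simpa [h] using hprod

theorem totalDegree_derivResultant_le [CommRing R] {G : (MvPolynomial τ R)[X]} {N : ℕ}
    (hG : ∀ k, (G.coeff k).totalDegree ≤ N) :
    (derivResultant G).totalDegree ≤ (2 * G.natDegree + 1) * N := by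
  have hG' (k : ℕ) : ((Polynomial.derivative G).coeff k).totalDegree ≤ N := by
    rw [Polynomial.coeff_derivative, ← Nat.cast_succ, ← nsmul_eq_mul']
    exact (MvPolynomial.totalDegree_smul_le _ _).trans (hG _)
  refine (totalDegree_resultant_le hG hG' _ _).trans_eq ?_
  ring

theorem totalDegree_aeval_le {σ : Type*} [CommSemiring R] (g : σ → MvPolynomial τ R) {n : ℕ}
    (hg : ∀ i, (g i).totalDegree ≤ n) (f : MvPolynomial σ R) :
    (MvPolynomial.aeval g f).totalDegree ≤ f.totalDegree * n := by
  rw [MvPolynomial.aeval_eq_eval₂Hom, MvPolynomial.coe_eval₂Hom, MvPolynomial.eval₂_eq]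
  refine MvPolynomial.totalDegree_finsetSum_le fun s hs => ?_
  calc (MvPolynomial.C (f.coeff s) * ∏ i ∈ s.support, g i ^ s i).totalDegree
    _ ≤ (∏ i ∈ s.support, g i ^ s i).totalDegree := by
      simpa using MvPolynomial.totalDegree_mul
        (MvPolynomial.C (f.coeff s)) (∏ i ∈ s.support, g i ^ s i)
    _ ≤ ∑ i ∈ s.support, (g i ^ s i).totalDegree := MvPolynomial.totalDegree_finsetProd _ _
    _ ≤ ∑ i ∈ s.support, s i * n := Finset.sum_le_sum fun i _ =>
      (MvPolynomial.totalDegree_pow _ _).trans (Nat.mul_le_mul_left _ (hg i))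
    _ = (s.sum fun _ => id) * n := by rw [← Finset.sum_mul]; rfl
    _ ≤ f.totalDegree * n := Nat.mul_le_mul_right _ (MvPolynomial.le_totalDegree hs)

theorem natDegree_eval₂_le {A B σ : Type*} [CommSemiring A] [CommSemiring B] (φ : A →+* B[X])
    (g : σ → B[X]) (f : MvPolynomial σ A) {m n : ℕ} (hφ : ∀ s, (φ (f.coeff s)).natDegree ≤ m)
    (hg : ∀ i, (g i).natDegree ≤ n) :
    (f.eval₂ φ g).natDegree ≤ m + f.totalDegree * n := by
  rw [MvPolynomial.eval₂_eq]
  refine Polynomial.natDegree_sum_le_of_forall_le _ _ fun s hs => ?_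
  calc (φ (f.coeff s) * ∏ i ∈ s.support, g i ^ s i).natDegree
    _ ≤ (φ (f.coeff s)).natDegree + (∏ i ∈ s.support, g i ^ s i).natDegree :=
      Polynomial.natDegree_mul_le
    _ ≤ m + ∑ i ∈ s.support, (g i ^ s i).natDegree :=
      add_le_add (hφ s) (Polynomial.natDegree_prod_le _ _)
    _ ≤ m + ∑ i ∈ s.support, s i * n := Nat.add_le_add_left (Finset.sum_le_sum fun i _ =>
      Polynomial.natDegree_pow_le.trans (Nat.mul_le_mul_left _ (hg i))) _
    _ = m + (s.sum fun _ => id) * n := by rw [← Finset.sum_mul]; rfl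
    _ ≤ m + f.totalDegree * n :=
      Nat.add_le_add_left (Nat.mul_le_mul_right _ (MvPolynomial.le_totalDegree hs)) _

theorem card_piFinset_filter_eval_eq_zero_le [CommRing R] [IsDomain R] [DecidableEq R] [Fintype τ]
    [Nonempty τ] [DecidableEq τ] {P : MvPolynomial τ R} (hP : P ≠ 0) (S : Finset R) :
    ((Fintype.piFinset fun _ : τ => S).filter fun x => MvPolynomial.eval x P = 0).card ≤
      P.totalDegree * S.card ^ (Fintype.card τ - 1) := by
  rcases S.eq_empty_or_nonempty with rfl | hS
  · simp
  let e := Fintype.equivFin τ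
  have hP' : MvPolynomial.renameEquiv R e P ≠ 0 :=
    (map_ne_zero_iff _ (MvPolynomial.renameEquiv R e).injective).2 hP
  have hcard : ((Fintype.piFinset fun _ : τ => S).filter fun x => MvPolynomial.eval x P = 0).card =
      ((Fintype.piFinset fun _ => S).filter fun y =>
        MvPolynomial.eval y (MvPolynomial.renameEquiv R e P) = 0).card := by
    refine Finset.card_equiv (e.arrowCongr (Equiv.refl R)) fun x => ?_
    simp [MvPolynomial.eval_rename, Function.comp_def, e.symm.forall_congr_left]
  have hz := MvPolynomial.schwartz_zippel_totalDegree hP' S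
  have hSpos : (0 : ℚ≥0) < S.card := by exact_mod_cast hS.card_pos
  rw [div_le_div_iff₀ (by positivity) hSpos, MvPolynomial.totalDegree_renameEquiv, ← hcard,
    ← pow_sub_one_mul Fintype.card_ne_zero, ← mul_assoc, mul_le_mul_iff_left₀ hSpos] at hz
  exact_mod_cast hz

theorem exists_eval_ne_zero_of_totalDegree_lt_card [CommRing R] [IsDomain R] [Finite τ]
    {P : MvPolynomial τ R} (hP : P ≠ 0) {S : Finset R} (hS : P.totalDegree < S.card) :
    ∃ x : τ → R, (∀ i, x i ∈ S) ∧ MvPolynomial.eval x P ≠ 0 := by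
  by_contra! h
  exact hP (MvPolynomial.eq_zero_of_eval_zero_at_prod_finset P (fun _ => S)
    (fun i => (MvPolynomial.degreeOf_le_totalDegree P i).trans_lt hS) h)

end TotalDegree

section PthPower

open MvPolynomial (pderiv)
open scoped Polynomial

variable {R : Type*} [CommRing R] [IsDomain R] (p : ℕ) [CharP R p]

theorem dvd_of_pderiv_eq_zero {τ : Type*} {f : MvPolynomial τ R} {j : τ} (hf : pderiv j f = 0)
    {s : τ →₀ ℕ} (hs : f.coeff s ≠ 0) : p ∣ s j := by
  by_cases hsj : s j = 0
  · exact hsj ▸ dvd_zero p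
  have hle : Finsupp.single j 1 ≤ s := Finsupp.single_le_iff.2 (Nat.one_le_iff_ne_zero.2 hsj)
  have hcoeff : (pderiv j f).coeff (s - Finsupp.single j 1) = f.coeff s * (s j : R) := by
    rw [MvPolynomial.coeff_pderiv, tsub_add_cancel_of_le hle]
    simp [Nat.cast_pred (Nat.pos_of_ne_zero hsj)]
  rw [hf, MvPolynomial.coeff_zero, zero_eq_mul] at hcoeff
  exact (CharP.cast_eq_zero_iff R p _).1 (hcoeff.resolve_left hs)

variable [Fact p.Prime]

theorem exists_pow_eq_of_derivative_eq_zero [PerfectRing R p] {r : R[X]}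
    (hr : Polynomial.derivative r = 0) : ∃ s : R[X], s ^ p = r := by
  refine ⟨(r.contract p).map (frobeniusEquiv R p).symm, ?_⟩
  rw [← polynomial_expand_eq, Polynomial.expand_contract p hr (Fact.out : p.Prime).ne_zero]

theorem exists_pow_eq_of_pderiv_eq_zero {τ : Type*} {f : MvPolynomial τ R}
    (hcoeff : ∀ s, ∃ r : R, r ^ p = f.coeff s) (hf : ∀ j, pderiv j f = 0) :
    ∃ g : MvPolynomial τ R, g ^ p = f := by
  suffices f ∈ (frobenius (MvPolynomial τ R) p).range from this
  rw [f.as_sum]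
  refine Subring.sum_mem _ fun s hs => ?_
  obtain ⟨r, hr⟩ := hcoeff s
  refine ⟨MvPolynomial.monomial (s.mapRange (· / p) (Nat.zero_div p)) r, ?_⟩
  have hexp : p • s.mapRange (· / p) (Nat.zero_div p) = s := by
    ext j
    simp [Nat.mul_div_cancel' (dvd_of_pderiv_eq_zero p (hf j) (MvPolynomial.mem_support_iff.1 hs))]
  rw [frobenius_def, MvPolynomial.monomial_pow, hexp, hr]

end PthPower

section Wronskian

open Polynomial (derivative wronskian)
open scoped Polynomial

variable {F : Type*} [Field F]

theorem algebraMap_mem_closure_of_derivative_eq_zero (hp : ringChar F ≠ 0) {r : F[X]}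
    (hr : derivative r = 0) : algebraMap F[X] (RatFunc F) r ∈
      Subfield.closure (Set.range (RatFunc.C (K := F)) ∪ {RatFunc.X ^ ringChar F}) := by
  rw [← Polynomial.expand_contract (ringChar F) hr hp,
    (r.contract (ringChar F)).as_sum_support_C_mul_X_pow]
  simp only [map_sum, map_mul, map_pow, Polynomial.expand_C, Polynomial.expand_X,
    RatFunc.algebraMap_C, RatFunc.algebraMap_X]
  refine sum_mem fun n _ => mul_mem ?_ (pow_mem ?_ _) <;> apply Subfield.subset_closure
  · exact .inl (Set.mem_range_self _)
  · exact .inr rfl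

theorem wronskian_ne_zero_of_notInFtp (hp : ringChar F ≠ 0) {a b : F[X]} (hab : IsCoprime a b)
    (h : notInFtp F a b) : wronskian a b ≠ 0 := by
  rw [Ne, hab.wronskian_eq_zero_iff]
  exact fun ⟨ha, hb⟩ => h (div_mem (algebraMap_mem_closure_of_derivative_eq_zero hp hb)
    (algebraMap_mem_closure_of_derivative_eq_zero hp ha))

theorem eq_zero_of_mul_eq_mul_of_wronskian_ne_zero {R : Type*} [CommRing R] [IsDomain R]
    {a b x y : R[X]} (hab : wronskian a b ≠ 0) (hx : derivative x = 0) (hy : derivative y = 0)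
    (h : b * x = a * y) : x = 0 ∧ y = 0 := by
  have h' : derivative b * x = derivative a * y := by
    simpa [hx, hy] using congrArg derivative h
  constructor <;> refine (mul_eq_zero.1 ?_).resolve_left hab <;> rw [wronskian]
  · linear_combination a * h' - derivative a * h
  · linear_combination b * h' - derivative b * h

end Wronskian

section LinearSubst

open MvPolynomial

theorem squarefree_map_of_forall_dvd_mem_range {M N Φ : Type*} [Monoid M] [CommMonoid N]
    [FunLike Φ M N] [MonoidHomClass Φ M N] {φ : Φ} (hφ : Function.Injective φ) {m : M}
    (hdvd : ∀ x, x ∣ φ m → x ∈ Set.range φ) (hm : Squarefree m) : Squarefree (φ m) := by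
  intro x hx
  obtain ⟨y, rfl⟩ := hdvd x ((dvd_mul_right x x).trans hx)
  obtain ⟨z, hz⟩ := hx
  obtain ⟨w, rfl⟩ := hdvd z ⟨φ y * φ y, by rw [hz, mul_comm]⟩
  rw [← map_mul, ← map_mul] at hz
  exact (hm y ⟨w, hφ hz⟩).map φ

theorem mem_range_rename_of_dvd_rename {R σ τ : Type*} [CommRing R] [IsDomain R] {ι : σ → τ}
    (hι : Function.Injective ι) {f : MvPolynomial σ R} (hf : f ≠ 0) {P : MvPolynomial τ R}
    (hP : P ∣ rename ι f) : P ∈ Set.range (rename ι : MvPolynomial σ R → MvPolynomial τ R) := by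
  classical
  obtain ⟨Q, hPQ⟩ := hP
  have hne : P * Q ≠ 0 := hPQ ▸ (map_ne_zero_iff _ (rename_injective ι hι)).2 hf
  refine exists_rename_eq_of_vars_subset_range P ι hι fun j hj => ?_
  have hj' : j ∈ (rename ι f).vars := by
    rw [SetLike.mem_coe, mem_vars_iff_degreeOf_ne_zero] at hj
    rw [mem_vars_iff_degreeOf_ne_zero, hPQ,
      degreeOf_mul_eq (left_ne_zero_of_mul hne) (right_ne_zero_of_mul hne)]
    omega
  obtain ⟨i, -, rfl⟩ := Finset.mem_image.1 (vars_rename ι f hj')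
  exact Set.mem_range_self i

variable {R σ : Type*} [CommRing R]

/-- The substitution `xᵢ ↦ aᵢ βᵢ + bᵢ γᵢ + cᵢ`, where `X (inl i)` stands for `βᵢ` and `X (inr i)`
for `γᵢ`. -/
noncomputable def linearSubst (a b c : σ → R) : MvPolynomial σ R →ₐ[R] MvPolynomial (σ ⊕ σ) R :=
  aeval fun i => C (a i) * X (Sum.inl i) + C (b i) * X (Sum.inr i) + C (c i)

/-- The affine change of variables `(βᵢ, γᵢ) ↦ (aᵢ βᵢ + bᵢ γᵢ + cᵢ, uᵢ γᵢ - vᵢ βᵢ)`, of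
determinant `uᵢ aᵢ + vᵢ bᵢ = 1`; it extends `linearSubst a b c` to twice as many variables. -/
noncomputable def linearChange (a b c u v : σ → R) (huv : ∀ i, u i * a i + v i * b i = 1) :
    MvPolynomial (σ ⊕ σ) R ≃ₐ[R] MvPolynomial (σ ⊕ σ) R :=
  have huv' (i : σ) : (C (u i) * C (a i) + C (v i) * C (b i) : MvPolynomial (σ ⊕ σ) R) = 1 := by
    rw [← C_mul, ← C_mul, ← C_add, huv, C_1]
  .ofAlgHom
    (aeval (Sum.elim (fun i => C (a i) * X (Sum.inl i) + C (b i) * X (Sum.inr i) + C (c i))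
      fun i => C (u i) * X (Sum.inr i) - C (v i) * X (Sum.inl i)))
    (aeval (Sum.elim (fun i => C (u i) * (X (Sum.inl i) - C (c i)) - C (b i) * X (Sum.inr i))
      fun i => C (v i) * (X (Sum.inl i) - C (c i)) + C (a i) * X (Sum.inr i)))
    (by
      ext1 (i | i)
      · simp only [AlgHom.comp_apply, AlgHom.id_apply, aeval_X, Sum.elim_inl, Sum.elim_inr,
          map_sub, map_mul, algHom_C, algebraMap_eq]
        linear_combination X (Sum.inl i) * huv' i
      · simp only [AlgHom.comp_apply, AlgHom.id_apply, aeval_X, Sum.elim_inl, Sum.elim_inr,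
          map_add, map_sub, map_mul, algHom_C, algebraMap_eq]
        linear_combination X (Sum.inr i) * huv' i)
    (by
      ext1 (i | i)
      · simp only [AlgHom.comp_apply, AlgHom.id_apply, aeval_X, Sum.elim_inl, Sum.elim_inr,
          map_add, map_mul, algHom_C, algebraMap_eq]
        linear_combination (X (Sum.inl i) - C (c i)) * huv' i
      · simp only [AlgHom.comp_apply, AlgHom.id_apply, aeval_X, Sum.elim_inl, Sum.elim_inr,
          map_sub, map_mul, algHom_C, algebraMap_eq]
        linear_combination X (Sum.inr i) * huv' i)

theorem linearSubst_eq_linearChange_rename (a b c u v : σ → R)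
    (huv : ∀ i, u i * a i + v i * b i = 1) (f : MvPolynomial σ R) :
    linearSubst a b c f = linearChange a b c u v huv (rename Sum.inl f) := by
  change aeval _ f = aeval _ (rename Sum.inl f)
  rw [aeval_rename]
  rfl

theorem linearSubst_injective {a b : σ → R} (hab : ∀ i, IsCoprime (a i) (b i)) (c : σ → R) :
    Function.Injective (linearSubst a b c) := by
  choose u v huv using hab
  simpa only [Function.comp_def, ← linearSubst_eq_linearChange_rename] using
    (linearChange a b c u v huv).injective.comp (rename_injective Sum.inl Sum.inl_injective)

theorem mem_range_linearSubst_of_dvd_linearSubst [IsDomain R] {a b c : σ → R}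
    (hab : ∀ i, IsCoprime (a i) (b i)) {f : MvPolynomial σ R} (hf : f ≠ 0)
    {P : MvPolynomial (σ ⊕ σ) R} (hP : P ∣ linearSubst a b c f) :
    P ∈ Set.range (linearSubst a b c) := by
  choose u v huv using hab
  rw [linearSubst_eq_linearChange_rename a b c u v huv,
    ← (linearChange a b c u v huv).apply_symm_apply P, map_dvd_iff] at hP
  obtain ⟨g, hg⟩ := mem_range_rename_of_dvd_rename Sum.inl_injective hf hP
  exact ⟨g, by simp [linearSubst_eq_linearChange_rename a b c u v huv, hg]⟩

theorem squarefree_linearSubst [IsDomain R] {a b : σ → R} (hab : ∀ i, IsCoprime (a i) (b i))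
    (c : σ → R) {f : MvPolynomial σ R} (hf : Squarefree f) : Squarefree (linearSubst a b c f) :=
  squarefree_map_of_forall_dvd_mem_range (linearSubst_injective hab c)
    (fun _ => mem_range_linearSubst_of_dvd_linearSubst hab hf.ne_zero) hf

theorem C_mul_pderiv_linearSubst (a b c : σ → R) (i : σ) (f : MvPolynomial σ R) :
    C (b i) * pderiv (Sum.inl i) (linearSubst a b c f) =
      C (a i) * pderiv (Sum.inr i) (linearSubst a b c f) := by
  classical
  have hX (k : σ) : C (b i) * pderiv (Sum.inl i) (linearSubst a b c (X k)) =
      C (a i) * pderiv (Sum.inr i) (linearSubst a b c (X k)) := by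
    simp only [linearSubst, aeval_X, map_add, Derivation.leibniz, pderiv_C, pderiv_X]
    rcases eq_or_ne k i with rfl | hk
    · simp [mul_comm]
    · simp [hk]
  induction f using MvPolynomial.induction_on with
  | C r => simp [linearSubst]
  | add f g hf hg => simp only [map_add, mul_add, hf, hg]
  | mul_X f k hf =>
    simp only [map_mul, Derivation.leibniz, smul_eq_mul]
    linear_combination linearSubst a b c f * hX k + linearSubst a b c (X k) * hf

end LinearSubst

section PolynomialSwap

open scoped Polynomial

variable {R τ : Type*} [CommSemiring R]

variable (R τ) in
/-- The identification of `R[t][xᵢ : i ∈ τ]` with `R[xᵢ : i ∈ τ][t]`. -/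
noncomputable def polynomialSwap : MvPolynomial τ R[X] ≃ₐ[R] (MvPolynomial τ R)[X] :=
  (MvPolynomial.optionEquivRight R τ).symm.trans (MvPolynomial.optionEquivLeft R τ)

theorem polynomialSwap_C (r : R[X]) :
    polynomialSwap R τ (MvPolynomial.C r) = r.map MvPolynomial.C := by
  have h : (polynomialSwap R τ : MvPolynomial τ R[X] →+* (MvPolynomial τ R)[X]).comp
      MvPolynomial.C = Polynomial.mapRingHom MvPolynomial.C := by
    ext1
    · ext1 r
      simp [polynomialSwap, MvPolynomial.optionEquivRight]
    · simp [polynomialSwap, MvPolynomial.optionEquivRight, MvPolynomial.optionEquivLeft_X_none]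
  exact DFunLike.congr_fun h r

theorem polynomialSwap_X (i : τ) :
    polynomialSwap R τ (MvPolynomial.X i) = Polynomial.C (MvPolynomial.X i) := by
  simp [polynomialSwap, MvPolynomial.optionEquivRight, MvPolynomial.optionEquivLeft_X_some]

theorem coeff_coeff_polynomialSwap (P : MvPolynomial τ R[X]) (n : ℕ) (s : τ →₀ ℕ) :
    ((polynomialSwap R τ P).coeff n).coeff s = (P.coeff s).coeff n := by
  classical
  induction P using MvPolynomial.induction_on generalizing s with
  | C r =>
    simp only [polynomialSwap_C, Polynomial.coeff_map, MvPolynomial.coeff_C]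
    split_ifs <;> simp
  | add P Q hP hQ => simp [hP, hQ]
  | mul_X P i hP =>
    rw [map_mul, polynomialSwap_X, Polynomial.coeff_mul_C, MvPolynomial.coeff_mul_X',
      MvPolynomial.coeff_mul_X']
    split_ifs <;> simp [hP]

theorem derivative_coeff_eq_zero_of_derivative_polynomialSwap_eq_zero {P : MvPolynomial τ R[X]}
    (hP : Polynomial.derivative (polynomialSwap R τ P) = 0) (s : τ →₀ ℕ) :
    Polynomial.derivative (P.coeff s) = 0 := by
  ext n
  have h := congrArg (fun Q => (Q.coeff n).coeff s) hP
  rw [Polynomial.coeff_derivative, ← Nat.cast_succ, mul_comm, ← map_natCast MvPolynomial.C,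
    MvPolynomial.coeff_C_mul, coeff_coeff_polynomialSwap] at h
  rw [Polynomial.coeff_derivative, ← Nat.cast_succ, mul_comm]
  simpa using h

theorem totalDegree_coeff_polynomialSwap_le (P : MvPolynomial τ R[X]) (n : ℕ) :
    ((polynomialSwap R τ P).coeff n).totalDegree ≤ P.totalDegree := by
  refine Finset.sup_mono fun s hs => ?_
  rw [MvPolynomial.mem_support_iff, coeff_coeff_polynomialSwap] at hs
  exact MvPolynomial.mem_support_iff.2 fun h => hs (by rw [h, Polynomial.coeff_zero])

theorem map_eval_polynomialSwap (x : τ → R) (P : MvPolynomial τ R[X]) :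
    (polynomialSwap R τ P).map (MvPolynomial.eval x) =
      MvPolynomial.eval (fun i => Polynomial.C (x i)) P := by
  induction P using MvPolynomial.induction_on with
  | C r =>
    have h : (MvPolynomial.eval x).comp MvPolynomial.C = RingHom.id R := by ext; simp
    simp [polynomialSwap_C, Polynomial.map_map, h]
  | add P Q hP hQ => simp [hP, hQ]
  | mul_X P i hP => simp [polynomialSwap_X, hP]

end PolynomialSwap

section GenericValue

open scoped Polynomial

variable {R σ : Type*} [CommRing R]

/-- The polynomial `f(t, aᵢ βᵢ + bᵢ γᵢ + cᵢ)` in `t`, with the indeterminates `βᵢ`, `γᵢ` moved to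
its coefficients: the generic member of the family of values under consideration. -/
noncomputable def genericValue (a b c : σ → R[X]) (f : MvPolynomial σ R[X]) :
    (MvPolynomial (σ ⊕ σ) R)[X] :=
  polynomialSwap R (σ ⊕ σ) (linearSubst a b c f)

theorem natDegree_genericValue_le {a b c : σ → R[X]} {f : MvPolynomial σ R[X]} {m n : ℕ}
    (hf : ∀ s, (f.coeff s).natDegree ≤ m)
    (habc : ∀ i, (a i).natDegree ≤ n ∧ (b i).natDegree ≤ n ∧ (c i).natDegree ≤ n) :
    (genericValue a b c f).natDegree ≤ m + f.totalDegree * n := by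
  rw [genericValue, linearSubst, ← RingHom.coe_coe (polynomialSwap R (σ ⊕ σ)),
    MvPolynomial.map_aeval, MvPolynomial.coe_eval₂Hom]
  refine natDegree_eval₂_le _ _ f (fun s => ?_) fun i => ?_
  · simpa [polynomialSwap_C] using Polynomial.natDegree_map_le.trans (hf s)
  · have hmap {r : R[X]} (hr : r.natDegree ≤ n) :
        (r.map (MvPolynomial.C (σ := σ ⊕ σ))).natDegree ≤ n :=
      Polynomial.natDegree_map_le.trans hr
    have hmul {r : R[X]} (hr : r.natDegree ≤ n) (j : σ ⊕ σ) :
        (r.map MvPolynomial.C * Polynomial.C (MvPolynomial.X j : MvPolynomial _ R)).natDegree ≤ n :=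
      (Polynomial.natDegree_mul_C_le _ _).trans (hmap hr)
    simp only [RingHom.coe_coe, map_add, map_mul, polynomialSwap_C, polynomialSwap_X]
    exact Polynomial.natDegree_add_le_of_degree_le
      (Polynomial.natDegree_add_le_of_degree_le (hmul (habc i).1 _) (hmul (habc i).2.1 _))
      (hmap (habc i).2.2)

theorem map_eval_genericValue (a b c : σ → R[X]) (f : MvPolynomial σ R[X]) (x : σ ⊕ σ → R) :
    (genericValue a b c f).map (MvPolynomial.eval x) = MvPolynomial.eval (fun i =>
      a i * Polynomial.C (x (Sum.inl i)) + b i * Polynomial.C (x (Sum.inr i)) + c i) f := by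
  rw [genericValue, map_eval_polynomialSwap]
  induction f using MvPolynomial.induction_on with
  | C r => simp [linearSubst]
  | add f g hf hg => simp [hf, hg]
  | mul_X f i hf =>
    simp only [map_mul, hf]
    simp [linearSubst]

theorem totalDegree_coeff_genericValue_le (a b c : σ → R[X]) (f : MvPolynomial σ R[X]) (n : ℕ) :
    ((genericValue a b c f).coeff n).totalDegree ≤ f.totalDegree := by
  refine (totalDegree_coeff_polynomialSwap_le _ n).trans ?_
  refine (totalDegree_aeval_le _ (n := 1) (fun i => ?_) f).trans_eq (mul_one _)
  have hmul (r : R[X]) (j : σ ⊕ σ) :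
      (MvPolynomial.C r * MvPolynomial.X j : MvPolynomial _ R[X]).totalDegree ≤ 1 :=
    by
    rw [MvPolynomial.C_mul_X_eq_monomial]
    exact (MvPolynomial.totalDegree_monomial_le _ _).trans (by simp)
  refine (MvPolynomial.totalDegree_add _ _).trans (max_le ?_ (by simp))
  exact (MvPolynomial.totalDegree_add _ _).trans (max_le (hmul _ _) (hmul _ _))

theorem squarefree_genericValue [IsDomain R] {a b : σ → R[X]} (hab : ∀ i, IsCoprime (a i) (b i))
    (c : σ → R[X]) {f : MvPolynomial σ R[X]} (hf : Squarefree f) :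
    Squarefree (genericValue a b c f) :=
  squarefree_map_of_forall_dvd_mem_range (polynomialSwap R _).injective
    (fun P _ => (polynomialSwap R _).surjective P) (squarefree_linearSubst hab c hf)

end GenericValue

section Discriminant

open Polynomial (derivative wronskian)
open scoped Polynomial

theorem not_irreducible_linearSubst_of_wronskian_ne_zero {R σ : Type*} [CommRing R] [IsDomain R]
    (p : ℕ) [Fact p.Prime] [CharP R p] [PerfectRing R p] {a b c : σ → R[X]}
    (hab : ∀ i, wronskian (a i) (b i) ≠ 0) {g : MvPolynomial σ R[X]}
    (hg : ∀ s, derivative ((linearSubst a b c g).coeff s) = 0) :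
    ¬ Irreducible (linearSubst a b c g) := by
  have hpderiv (j : σ ⊕ σ) (s : σ ⊕ σ →₀ ℕ) :
      derivative ((MvPolynomial.pderiv j (linearSubst a b c g)).coeff s) = 0 := by
    rw [MvPolynomial.coeff_pderiv, ← Nat.cast_succ, mul_comm, ← nsmul_eq_mul,
      Polynomial.derivative_smul, hg, smul_zero]
  have hcoeff (i : σ) (s : σ ⊕ σ →₀ ℕ) := by
    refine eq_zero_of_mul_eq_mul_of_wronskian_ne_zero (hab i) (hpderiv (.inl i) s)
      (hpderiv (.inr i) s) ?_
    simpa using congrArg (MvPolynomial.coeff s) (C_mul_pderiv_linearSubst a b c i g)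
  obtain ⟨h, hh⟩ := exists_pow_eq_of_pderiv_eq_zero p
    (fun s => exists_pow_eq_of_derivative_eq_zero p (hg s)) (f := linearSubst a b c g) <| by
      rintro (i | i) <;> ext1 s
      exacts [(hcoeff i s).1, (hcoeff i s).2]
  exact hh ▸ not_irreducible_pow (Fact.out : p.Prime).ne_one

variable {F σ : Type*} [Field F]

theorem natDegree_eq_zero_of_prime_dvd_genericValue [PerfectField F] {a b c : σ → F[X]}
    (hab : ∀ i, IsCoprime (a i) (b i)) {f : MvPolynomial σ F[X]} (hf : Squarefree f)
    (h : ringChar F = 0 ∨ (genericValue a b c f).natDegree < ringChar F ∨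
      ∀ i, notInFtp F (a i) (b i))
    {P : (MvPolynomial (σ ⊕ σ) F)[X]} (hP : Prime P) (hPG : P ∣ genericValue a b c f)
    (hPG' : P ∣ derivative (genericValue a b c f)) : P.natDegree = 0 := by
  have hG : Squarefree (genericValue a b c f) := squarefree_genericValue hab c hf
  have hP' : derivative P = 0 := derivative_eq_zero_of_prime_dvd_of_dvd_derivative hG hP hPG hPG'
  have hchar : ringChar (MvPolynomial (σ ⊕ σ) F) = ringChar F :=
    ringChar.eq _ _
  have of_lt_ringChar := natDegree_eq_zero_of_derivative_eq_zero_of_lt_ringChar hP'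
  rw [hchar] at of_lt_ringChar
  rcases eq_or_ne (ringChar F) 0 with hp | hp
  · exact of_lt_ringChar (.inl hp)
  rcases h.resolve_left hp with hlt | hnot
  · exact of_lt_ringChar (.inr ((Polynomial.natDegree_le_of_dvd hPG hG.ne_zero).trans_lt hlt))
  obtain ⟨P, rfl⟩ := (polynomialSwap F (σ ⊕ σ)).surjective P
  obtain ⟨g, rfl⟩ := mem_range_linearSubst_of_dvd_linearSubst hab hf.ne_zero
    ((map_dvd_iff (polynomialSwap F (σ ⊕ σ))).1 hPG)
  have : Fact (ringChar F).Prime := ⟨(CharP.char_is_prime_or_zero F _).resolve_right hp⟩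
  have : PerfectRing F (ringChar F) := PerfectField.toPerfectRing _
  refine absurd ((MulEquiv.irreducible_iff (polynomialSwap F (σ ⊕ σ))).1 hP.irreducible) ?_
  exact not_irreducible_linearSubst_of_wronskian_ne_zero (ringChar F)
    (fun i => wronskian_ne_zero_of_notInFtp hp (hab i) (hnot i))
    (derivative_coeff_eq_zero_of_derivative_polynomialSwap_eq_zero hP')

theorem derivResultant_genericValue_ne_zero [PerfectField F] {a b c : σ → F[X]}
    (hab : ∀ i, IsCoprime (a i) (b i)) {f : MvPolynomial σ F[X]} (hf : Squarefree f)
    (h : ringChar F = 0 ∨ (genericValue a b c f).natDegree < ringChar F ∨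
      ∀ i, notInFtp F (a i) (b i)) :
    derivResultant (genericValue a b c f) ≠ 0 :=
  derivResultant_ne_zero (squarefree_genericValue hab c hf).ne_zero fun _ =>
    natDegree_eq_zero_of_prime_dvd_genericValue hab hf h

theorem squarefree_eval_of_eval_derivResultant_ne_zero {a b c : σ → F[X]}
    {f : MvPolynomial σ F[X]} {β γ : σ → F}
    (h : MvPolynomial.eval (Sum.elim β γ) (derivResultant (genericValue a b c f)) ≠ 0) :
    Squarefree (MvPolynomial.eval (fun i => a i * Polynomial.C (β i) +
      b i * Polynomial.C (γ i) + c i) f) := by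
  simpa only [map_eval_genericValue, Sum.elim_inl, Sum.elim_inr] using
    (separable_map_of_isUnit_derivResultant (MvPolynomial.eval (Sum.elim β γ)) h.isUnit).squarefree

end Discriminant

section Counting

theorem ncard_le_of_forall_eval_sumElim_eq_zero {R σ : Type*} [CommRing R] [IsDomain R]
    [Fintype σ] [Nonempty σ] {P : MvPolynomial (σ ⊕ σ) R} (hP : P ≠ 0) (S : Finset R)
    {T : Set ((σ → R) × (σ → R))} (hTS : ∀ βγ ∈ T, ∀ i, βγ.1 i ∈ S ∧ βγ.2 i ∈ S)
    (hT : ∀ βγ ∈ T, MvPolynomial.eval (Sum.elim βγ.1 βγ.2) P = 0) :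
    T.ncard ≤ P.totalDegree * S.card ^ (2 * Fintype.card σ - 1) := by
  classical
  rw [two_mul, ← Fintype.card_sum]
  refine le_trans ?_ (card_piFinset_filter_eval_eq_zero_le hP S)
  rw [← Set.ncard_coe_finset]
  refine Set.ncard_le_ncard_of_injOn (Equiv.sumArrowEquivProdArrow σ σ R).symm
    (fun βγ hβγ => ?_) (Equiv.injective _).injOn (Finset.finite_toSet _)
  simpa [Equiv.sumArrowEquivProdArrow, ← forall_and, hTS βγ hβγ] using hT βγ hβγ

end Counting

section SquarefreeValues

open scoped Polynomial

variable {F σ : Type*} [Field F] [PerfectField F]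

theorem squarefree_values_multivariate_linear_sparse_general [Fintype σ] [Nonempty σ]
    (S : Finset F) {N : ℕ} {f : MvPolynomial σ F[X]} {a b c : σ → F[X]} (hf : Squarefree f)
    (hfdeg : f.totalDegree ≤ N) (hfcoeff : ∀ s, (f.coeff s).natDegree ≤ N)
    (hab : ∀ i, IsCoprime (a i) (b i))
    (habc : ∀ i, (a i).natDegree ≤ N ∧ (b i).natDegree ≤ N ∧ (c i).natDegree ≤ N)
    (h : ringChar F = 0 ∨ N + N ^ 2 < ringChar F ∨ ∀ i, notInFtp F (a i) (b i)) :
    {βγ : (σ → F) × (σ → F) | (∀ i, βγ.1 i ∈ S ∧ βγ.2 i ∈ S) ∧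
        ¬ Squarefree (MvPolynomial.eval (fun i => a i * Polynomial.C (βγ.1 i) +
          b i * Polynomial.C (βγ.2 i) + c i) f)}.ncard ≤
      (2 * (N + N ^ 2) + 1) * N * S.card ^ (2 * Fintype.card σ - 1) ∧
    ((2 * (N + N ^ 2) + 1) * N < S.card → ∃ β γ : σ → F, (∀ i, β i ∈ S ∧ γ i ∈ S) ∧
      Squarefree (MvPolynomial.eval (fun i => a i * Polynomial.C (β i) +
        b i * Polynomial.C (γ i) + c i) f)) := by
  set D := derivResultant (genericValue a b c f)
  have hdeg : (genericValue a b c f).natDegree ≤ N + N ^ 2 :=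
    (natDegree_genericValue_le hfcoeff habc).trans <| by rw [sq]; gcongr
  have hD : D ≠ 0 :=
    derivResultant_genericValue_ne_zero hab hf (h.imp_right (.imp_left hdeg.trans_lt))
  have hDdeg : D.totalDegree ≤ (2 * (N + N ^ 2) + 1) * N :=
    (totalDegree_derivResultant_le fun n =>
      (totalDegree_coeff_genericValue_le a b c f n).trans hfdeg).trans <| by gcongr
  constructor
  · refine (ncard_le_of_forall_eval_sumElim_eq_zero hD S (fun _ h => h.1) fun βγ hβγ => ?_).trans
      (Nat.mul_le_mul_right _ hDdeg)
    exact by_contra fun h0 => hβγ.2 (squarefree_eval_of_eval_derivResultant_ne_zero h0)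
  · intro hS
    obtain ⟨x, hxS, hx⟩ := exists_eval_ne_zero_of_totalDegree_lt_card hD (hDdeg.trans_lt hS)
    exact ⟨x ∘ Sum.inl, x ∘ Sum.inr, fun i => ⟨hxS _, hxS _⟩,
      squarefree_eval_of_eval_derivResultant_ne_zero (by rwa [Sum.elim_comp_inl_inr])⟩

end SquarefreeValues

/-- For every `N` there are constants `C N`, `C' N` such that for every
finite field `F_q` of characteristic `p`, every `d ≥ 1`, every square-free
`f ∈ F_q[t][x₁,…,x_d]` with `deg_t f ≤ N` and total `x`-degree at most `N`, and all
`a_i, b_i, c_i ∈ F_q[t]` of degree at most `N` with `gcd(a_i, b_i) = 1`, if `p > C N` or for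
every `i` we have `a_i ≠ 0` and `b_i/a_i ∉ F_q(t^p)`, then the number of tuples
`(β, γ) ∈ F_q^d × F_q^d` with `f(t, a₁β₁ + b₁γ₁ + c₁, …)` not square-free is at most
`C' N · q^{2d−1}`; in particular if `q > C' N` some tuple makes the value square-free. -/
theorem squarefree_values_multivariate_linear_sparse (N : ℕ) :
    ∃ C C' : ℕ, ∀ (F : Type) [Field F] [Fintype F] (d : ℕ),
      1 ≤ d →
      ∀ (f : MvPolynomial (Fin d) (Polynomial F)) (a b c : Fin d → Polynomial F),
        Squarefree f →
        f.totalDegree ≤ N → (∀ s, (f.coeff s).natDegree ≤ N) →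
        (∀ i, IsRelPrime (a i) (b i)) →
        (∀ i, (a i).natDegree ≤ N ∧ (b i).natDegree ≤ N ∧ (c i).natDegree ≤ N) →
        (C < ringChar F ∨ (∀ i, a i ≠ 0 ∧ notInFtp F (a i) (b i))) →
        Set.ncard {βγ : (Fin d → F) × (Fin d → F) |
            ¬ Squarefree (MvPolynomial.eval
              (fun i => a i * Polynomial.C (βγ.1 i) + b i * Polynomial.C (βγ.2 i) + c i) f)}
            ≤ C' * Fintype.card F ^ (2 * d - 1) ∧
        (C' < Fintype.card F →
          ∃ β γ : Fin d → F,
            Squarefree (MvPolynomial.eval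
              (fun i => a i * Polynomial.C (β i) + b i * Polynomial.C (γ i) + c i) f)) := by
  refine ⟨N + N ^ 2, (2 * (N + N ^ 2) + 1) * N, ?_⟩
  intro F _ _ d hd f a b c hf hfdeg hfcoeff hab habc h
  have : Nonempty (Fin d) := ⟨⟨0, hd⟩⟩
  simpa using squarefree_values_multivariate_linear_sparse_general Finset.univ hf hfdeg hfcoeff
    (fun i => (hab i).isCoprime) habc (.inr (h.imp_right fun h i => (h i).2))
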